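/- (Corollary: local uniqueness for the inverse drift problem.) Fix a bounded continuous function p : closure(Ω) → ℝ and functions a₁, …, a_n ∈ C¹(closure(Ω)) such that the n×n matrix with columns ∇a₁(x), …, ∇a_n(x) is invertible for every x ∈ closure(Ω). Then there exists a graph-type subdomain D with D ⊂ Ω and 0 ∈ ∂D ∩ ∂Ω, independent of the fields H₁, H₂ below, such that: if H₁, H₂ ∈ 𝓗 and, for j = 1,2 and k = 1,…,n, u_{j,k} : closure(Ω) × [0,T] → ℝ are functions such that u_{j,k} and ∂_t u_{j,k} are C¹ on closure(Ω) × [0,T], u_{j,k} satisfies ∂_t u_{j,k} + ⟨H_j(x), ∇_x u_{j,k}⟩ + p(x) u_{j,k} = 0 on Ω × (0,T) and u_{j,k}(x,0) = a_k(x) on Ω, and if u_{1,k}(x', ℓ(x'), t) = u_{2,k}(x', ℓ(x'), t) for all |x'| < ρ₀, all t ∈ (0,T) and all k = 1,…,n, then H₁(x) = H₂(x) for every x ∈ D. -/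

import Mathlib

noncomputable section

open MeasureTheory Metric Set
open scoped RealInnerProductSpace

abbrev Esp (n : ℕ) : Type := EuclideanSpace ℝ (Fin n)

/-- The point `(x', xₙ) ∈ ℝ^{d+1} = ℝ^d × ℝ`. -/
noncomputable def graphMk (d : ℕ) (x' : Esp d) (xn : ℝ) : Esp (d+1) :=
  (EuclideanSpace.equiv (Fin (d+1)) ℝ).symm
    (Fin.snoc (⇑(EuclideanSpace.equiv (Fin d) ℝ) x') xn)

/-- `H` is `(M, δ₀)`-admissible on the compact set `K`. -/
def IsAdmissible {n : ℕ} (M δ₀ : ℝ) (K : Set (Esp n)) (H : Esp n → Esp n) : Prop :=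
  ∃ U : Set (Esp n), IsOpen U ∧ Convex ℝ U ∧ K ⊆ U ∧ ContDiffOn ℝ 1 H U ∧
    (∀ x ∈ U, ‖H x‖ ≤ M) ∧ (∀ x ∈ U, ‖fderiv ℝ H x‖ ≤ M) ∧ (∀ x ∈ K, δ₀ < ‖H x‖)

/-- `ψ_H(x) = ⟨x, H(x)⟩`. -/
noncomputable def psiW {n : ℕ} (H : Esp n → Esp n) (x : Esp n) : ℝ := ⟪x, H x⟫

/-- The Carleman weight `φ_H(x,t) = -βt + ψ_H(x)`. -/
noncomputable def phiW {n : ℕ} (β : ℝ) (H : Esp n → Esp n) (x : Esp n) (t : ℝ) : ℝ :=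
  -(β * t) + psiW H x

/-- Outward unit normal `ν₁` of the upper graph `xₙ = ℓ(x')`. -/
noncomputable def nuUp (d : ℕ) (ℓ : Esp d → ℝ) (x' : Esp d) : Esp (d+1) :=
  (Real.sqrt (1 + ‖gradient ℓ x'‖ ^ 2))⁻¹ • graphMk d (-(gradient ℓ x')) 1

/-- Outward unit normal `ν₂` of the lower graph `xₙ = m(x')`. -/
noncomputable def nuDown (d : ℕ) (m : Esp d → ℝ) (x' : Esp d) : Esp (d+1) :=
  (Real.sqrt (1 + ‖gradient m x'‖ ^ 2))⁻¹ • graphMk d (gradient m x') (-1)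

/-- Area element `ω(x') = √(1 + |∇m(x')|²)` of the graph of `m`. -/
noncomputable def omegaW (d : ℕ) (m : Esp d → ℝ) (x' : Esp d) : ℝ :=
  Real.sqrt (1 + ‖gradient m x'‖ ^ 2)

/-- The graph domain `D = {(x', xₙ) : |x'| < ρ₁, ℓ(x') − ℓ̃(x') < xₙ < ℓ(x')}`. -/
def graphDomain (d : ℕ) (ρ₁ : ℝ) (ℓ ℓt : Esp d → ℝ) : Set (Esp (d+1)) :=
  {x | ∃ x' : Esp d, ∃ xn : ℝ, ‖x'‖ < ρ₁ ∧ ℓ x' - ℓt x' < xn ∧ xn < ℓ x' ∧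
    x = graphMk d x' xn}

open Filter Topology NNReal

/-- The Picard–Lindelöf theorem, recording that the solution stays in the ball. -/
lemma IsPicardLindelof.exists_hasDerivWithinAt_mem_closedBall
    {E : Type*} [NormedAddCommGroup E] [NormedSpace ℝ E] [CompleteSpace E]
    {f : ℝ → E → E} {tmin tmax : ℝ} {t₀ : Icc tmin tmax} {x₀ x : E} {a r L K : ℝ≥0}
    (hf : IsPicardLindelof f t₀ x₀ a r L K) (hx : x ∈ closedBall x₀ r) :
    ∃ α : ℝ → E, α t₀ = x ∧ (∀ t, α t ∈ closedBall x₀ a) ∧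
      ∀ t ∈ Icc tmin tmax, HasDerivWithinAt α (f t (α t)) (Icc tmin tmax) t := by
  obtain ⟨α, hα⟩ := ODE.FunSpace.exists_isFixedPt_next hf hx
  refine ⟨α.compProj, by rw [ODE.FunSpace.compProj_val, ← hα, ODE.FunSpace.next_apply₀],
    fun t ↦ α.compProj_mem_closedBall hf.mul_max_le, fun t ht ↦ ?_⟩
  apply ODE.hasDerivWithinAt_picard_Icc t₀.2 hf.continuousOn_uncurry
    α.continuous_compProj.continuousOn (fun _ ht' ↦ α.compProj_mem_closedBall hf.mul_max_le)
    x ht |>.congr_of_mem _ ht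
  intro t' ht'
  nth_rw 1 [← hα]
  rw [ODE.FunSpace.compProj_of_mem ht', ODE.FunSpace.next_apply]

/-- Integral curves of Lipschitz fields that are transversal to a level set `Φ = 0` at the origin
and start slightly below it cross the level set in a short time. All the constants depend on the
field only through its Lipschitz constant, its size and its transversality at the origin. -/
lemma exists_exit_curve {E : Type*} [NormedAddCommGroup E] [NormedSpace ℝ E] [CompleteSpace E]
    {Φ : E → ℝ} (hΦ : ContDiffAt ℝ 1 Φ 0) {V : Set E} (hV : V ∈ 𝓝 (0 : E))
    {T M δ : ℝ} (hT : 0 < T) (hM : 0 < M) (hδ : 0 < δ) (K : ℝ≥0) :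
    ∃ r > 0, ∃ η > 0, ∀ G : E → E, LipschitzWith K G → ‖G 0‖ ≤ M → δ < fderiv ℝ Φ 0 (G 0) →
      ∀ x : E, ‖x‖ ≤ r → -η < Φ x → Φ x < 0 →
        ∃ τ ∈ Ioo 0 T, ∃ X : ℝ → E, X 0 = x ∧ (∀ s, X s ∈ V) ∧
          (∀ s ∈ Icc 0 τ, HasDerivWithinAt X (G (X s)) (Icc 0 τ) s) ∧
          (∀ s ∈ Ico 0 τ, Φ (X s) < 0) ∧ Φ (X τ) = 0 := by
  have hK : (0 : ℝ) ≤ K := K.2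
  set ε : ℝ := δ / (4 * (M + K)) with hε
  have hε0 : 0 < ε := by positivity
  have hcont : ContinuousAt (fderiv ℝ Φ) 0 := hΦ.continuousAt_fderiv (by norm_num)
  have hdiff : ∀ᶠ x in 𝓝 (0 : E), DifferentiableAt ℝ Φ x :=
    (hΦ.eventually (by simp)).mono fun x hx => hx.differentiableAt (by norm_num)
  have hnear : ∀ᶠ x in 𝓝 (0 : E), x ∈ V ∧ DifferentiableAt ℝ Φ x ∧
      ‖fderiv ℝ Φ x - fderiv ℝ Φ 0‖ < ε := by
    refine Filter.Eventually.and hV (hdiff.and ?_)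
    have := Metric.tendsto_nhds.1 hcont ε hε0
    simpa [dist_eq_norm] using this
  obtain ⟨R₀, hR₀, hball⟩ := Metric.nhds_basis_closedBall.eventually_iff.1 hnear
  set N : ℝ := ‖fderiv ℝ Φ 0‖ with hN
  have hN0 : 0 ≤ N := norm_nonneg _
  set R : ℝ := min R₀ (min 1 (δ / (4 * (N * K + 1)))) with hR
  have hRpos : 0 < R := by positivity
  have hR1 : R ≤ 1 := (min_le_right _ _).trans (min_le_left _ _)
  have hRR₀ : R ≤ R₀ := min_le_left _ _
  have hRN : N * (K * R) ≤ δ / 4 := by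
    have h1 : R ≤ δ / (4 * (N * K + 1)) := (min_le_right _ _).trans (min_le_right _ _)
    rw [le_div_iff₀ (by positivity)] at h1
    nlinarith
  set L : ℝ := M + K with hL
  have hLpos : 0 < L := by positivity
  set S : ℝ := min (T / 2) (R / (2 * L)) with hS
  have hSpos : 0 < S := by positivity
  have hST : S < T := (min_le_left _ _).trans_lt (by linarith)
  have hSL : L * S ≤ R / 2 := by
    have h1 : S ≤ R / (2 * L) := min_le_right _ _
    rw [le_div_iff₀ (by positivity)] at h1
    linarith
  refine ⟨R / 2, by positivity, δ / 2 * S, by positivity, fun G hG hG0 hGδ x hx hxη hx0 => ?_⟩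
  have hGsub : ∀ y ∈ closedBall (0 : E) R, ‖G y - G 0‖ ≤ K * R := fun y hy => by
    have := hG.norm_sub_le y 0
    rw [mem_closedBall_zero_iff] at hy
    rw [sub_zero] at this
    exact this.trans (by gcongr)
  have hGle : ∀ y ∈ closedBall (0 : E) R, ‖G y‖ ≤ L := fun y hy => by
    have h1 := hGsub y hy
    have h2 : ‖G y‖ ≤ ‖G y - G 0‖ + ‖G 0‖ := norm_le_norm_sub_add _ _
    nlinarith
  have htrans : ∀ y ∈ closedBall (0 : E) R, δ / 2 ≤ fderiv ℝ Φ y (G y) := fun y hy => by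
    have h1 : ‖(fderiv ℝ Φ y - fderiv ℝ Φ 0) (G y)‖ ≤ ε * L :=
      (ContinuousLinearMap.le_opNorm _ _).trans
        (mul_le_mul (hball (closedBall_subset_closedBall hRR₀ hy)).2.2.le (hGle y hy)
          (norm_nonneg _) hε0.le)
    have h2 : ‖fderiv ℝ Φ 0 (G y - G 0)‖ ≤ N * (K * R) :=
      (ContinuousLinearMap.le_opNorm _ _).trans (by gcongr; exact hGsub y hy)
    have h3 : ε * L = δ / 4 := by rw [hε]; field_simp
    rw [Real.norm_eq_abs, abs_le] at h1 h2
    simp only [sub_apply, map_sub] at h1 h2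
    linarith [h1.1, h2.1]
  have hPL : IsPicardLindelof (fun _ : ℝ => G) (tmin := 0) (tmax := S) ⟨0, le_rfl, hSpos.le⟩ 0
      (.mk R hRpos.le) (.mk (R / 2) (by positivity)) (.mk L hLpos.le) K := by
    refine IsPicardLindelof.of_time_independent (fun y hy => hGle y hy) hG.lipschitzOnWith ?_
    simp only [NNReal.coe_mk, sub_zero, sub_self, max_eq_left hSpos.le]
    linarith
  obtain ⟨X, hX0, hXmem, hXd⟩ := hPL.exists_hasDerivWithinAt_mem_closedBall (x := x)
    (by simpa using hx)
  change X 0 = x at hX0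
  have hXd' : ∀ t ∈ Icc 0 S,
      HasDerivWithinAt (Φ ∘ X) (fderiv ℝ Φ (X t) (G (X t))) (Icc 0 S) t := fun t ht =>
    (hball (closedBall_subset_closedBall hRR₀ (hXmem t))).2.1.hasFDerivAt.comp_hasDerivWithinAt t
      (hXd t ht)
  have hcontX : ContinuousOn (Φ ∘ X) (Icc 0 S) := fun t ht => (hXd' t ht).continuousWithinAt
  have hgrow : ∀ s ∈ Icc 0 S, ∀ t ∈ Icc 0 S, s ≤ t → δ / 2 * (t - s) ≤ Φ (X t) - Φ (X s) := by
    refine (convex_Icc 0 S).mul_sub_le_image_sub_of_le_deriv hcontX (fun t ht => ?_)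
      (fun t ht => ?_)
    all_goals
      rw [interior_Icc] at ht
      have := (hXd' t (Ioo_subset_Icc_self ht)).hasDerivAt (Icc_mem_nhds ht.1 ht.2)
    · exact this.differentiableAt.differentiableWithinAt
    · rw [this.deriv]
      exact htrans _ (hXmem t)
  have hS0 : (0 : ℝ) ∈ Icc 0 S := ⟨le_rfl, hSpos.le⟩
  have hSS : S ∈ Icc 0 S := ⟨hSpos.le, le_rfl⟩
  have hend : 0 < Φ (X S) := by
    have := hgrow 0 hS0 S hSS hSpos.le
    rw [hX0] at this
    linarith
  obtain ⟨τ, hτ, hτΦ⟩ := intermediate_value_Icc hSpos.le hcontX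
    (show (0 : ℝ) ∈ Icc _ _ from ⟨by simpa [hX0] using hx0.le, hend.le⟩)
  change Φ (X τ) = 0 at hτΦ
  have hτ0 : 0 < τ := hτ.1.lt_of_ne fun h => by rw [← h, hX0] at hτΦ; linarith
  refine ⟨τ, ⟨hτ0, hτ.2.trans_lt hST⟩, X, hX0,
    fun s => (hball (closedBall_subset_closedBall hRR₀ (hXmem s))).1, fun s hs => ?_,
    fun s hs => ?_, hτΦ⟩
  · exact (hXd s ⟨hs.1, hs.2.trans hτ.2⟩).mono (Icc_subset_Icc_right hτ.2)
  · have := hgrow s ⟨hs.1, hs.2.le.trans hτ.2⟩ τ hτ hs.2.le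
    have := mul_pos (half_pos hδ) (sub_pos.2 hs.2)
    linarith

/-- A backward Gronwall estimate with an exponentially decaying source. -/
lemma abs_le_of_abs_deriv_le_exp {z z' : ℝ → ℝ} {σ P B lam : ℝ} (hσ : 0 < σ) (hB : 0 < B)
    (hP : P < lam) (hz : ContinuousOn z (Icc 0 σ)) (hzσ : z σ = 0)
    (hz' : ∀ r ∈ Ioo 0 σ, HasDerivAt z (z' r) r)
    (hle : ∀ r ∈ Ioo 0 σ, |z' r| ≤ P * |z r| + B * Real.exp (-lam * r)) :
    |z 0| ≤ 2 * B / (lam - P) := by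
  set A : ℝ := 2 * B / (lam - P) with hA
  have hlp : 0 < lam - P := sub_pos.2 hP
  have hA0 : 0 < A := by positivity
  have hAeq : A * (lam - P) = 2 * B := by rw [hA]; field_simp
  have hy : ContinuousOn (fun q => z (σ - q)) (Icc 0 σ) :=
    hz.comp (by fun_prop) fun q hq => ⟨by linarith [hq.2], by linarith [hq.1]⟩
  have hsmall : ∀ᶠ q in 𝓝[>] (0 : ℝ), ‖z (σ - q)‖ < A * Real.exp (-lam * (σ - q)) := by
    have h1 : Tendsto (fun q => ‖z (σ - q)‖) (𝓝[>] 0) (𝓝 0) := by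
      have := ((hy 0 ⟨le_rfl, hσ.le⟩).mono Ioc_subset_Icc_self).norm
      rw [ContinuousWithinAt, sub_zero, hzσ, norm_zero, nhdsWithin_Ioc_eq_nhdsGT hσ] at this
      exact this
    have h2 : Tendsto (fun q => A * Real.exp (-lam * (σ - q))) (𝓝[>] 0)
        (𝓝 (A * Real.exp (-lam * (σ - 0)))) :=
      (Continuous.tendsto (by fun_prop) 0).mono_left nhdsWithin_le_nhds
    exact h1.eventually_lt h2 (by positivity)
  obtain ⟨ε, hεlt, hε⟩ :=
    (hsmall.and (Ioo_mem_nhdsGT hσ)).exists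
  have key := image_norm_le_of_norm_deriv_right_lt_deriv_boundary (a := ε) (b := σ)
    (f := fun q => z (σ - q)) (f' := fun q => -z' (σ - q))
    (B := fun q => A * Real.exp (-lam * (σ - q)))
    (B' := fun q => A * (Real.exp (-lam * (σ - q)) * lam))
    (hy.mono (Icc_subset_Icc_left hε.1.le)) (fun q hq => ?_) hεlt.le (fun q => ?_)
    (fun q hq heq => ?_) (x := σ) ⟨hε.2.le, le_rfl⟩
  · refine key.trans' ?_ |>.trans ?_
    · simp
    · simp
  · have h1 := hz' (σ - q) ⟨by linarith [hq.2], by linarith [hq.1, hε.1]⟩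
    have h2 : HasDerivAt (fun q => σ - q) (-1) q := by simpa using (hasDerivAt_id q).const_sub σ
    simpa [Function.comp_def] using (HasDerivAt.comp q h1 h2).hasDerivWithinAt
  · have h2 : HasDerivAt (fun q => -lam * (σ - q)) lam q := by
      simpa using ((hasDerivAt_id q).const_sub σ).const_mul (-lam)
    exact h2.exp.const_mul A
  · have h1 := hle (σ - q) ⟨by linarith [hq.2], by linarith [hq.1, hε.1]⟩
    simp only [Real.norm_eq_abs] at heq
    rw [heq] at h1
    rw [norm_neg, Real.norm_eq_abs]
    have h3 := Real.exp_pos (-lam * (σ - q))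
    refine h1.trans_lt ?_
    have : P * (A * Real.exp (-lam * (σ - q))) + B * Real.exp (-lam * (σ - q)) + B *
        Real.exp (-lam * (σ - q)) = A * (Real.exp (-lam * (σ - q)) * lam) := by
      linear_combination (-Real.exp (-lam * (σ - q))) * hAeq
    have := mul_pos hB h3
    linarith

/-- The derivative of a function that is `C¹` on a compact set is bounded on its interior. -/
lemma exists_norm_fderiv_le_of_contDiffOn {E F : Type*} [NormedAddCommGroup E] [NormedSpace ℝ E]
    [NormedAddCommGroup F] [NormedSpace ℝ F] {g : E → F} {K : Set E} (hK : IsCompact K)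
    (hg : ContDiffOn ℝ 1 g K) : ∃ C : ℝ, ∀ z ∈ interior K, ‖fderiv ℝ g z‖ ≤ C := by
  refine hK.induction_on (p := fun S => ∃ C : ℝ, ∀ z ∈ S ∩ interior K, ‖fderiv ℝ g z‖ ≤ C)
    ⟨0, by simp⟩ (fun s t hst ⟨C, hC⟩ => ⟨C, fun z hz => hC z ⟨hst hz.1, hz.2⟩⟩)
    (fun s t ⟨C, hC⟩ ⟨C', hC'⟩ => ⟨max C C', fun z hz => ?_⟩) (fun x hx => ?_) |>.imp
    fun C hC z hz => hC z ⟨interior_subset hz, hz⟩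
  · rcases hz.1 with h | h
    · exact (hC z ⟨h, hz.2⟩).trans (le_max_left _ _)
    · exact (hC' z ⟨h, hz.2⟩).trans (le_max_right _ _)
  · have h1 : ContDiffWithinAt ℝ (0 + 1) g K x := by simpa using hg x hx
    obtain ⟨v, hv, -, -, g', hg', hcont⟩ :=
      (contDiffWithinAt_succ_iff_hasFDerivWithinAt' (by simp)).1 h1
    rw [insert_eq_of_mem hx] at hv
    have hb : ∀ᶠ z in 𝓝[K] x, ‖g' z‖ < ‖g' x‖ + 1 :=
      hcont.continuousWithinAt.norm.eventually_lt_const (by simp)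
    refine ⟨v ∩ {z | ‖g' z‖ < ‖g' x‖ + 1}, inter_mem hv hb, ‖g' x‖ + 1, fun z hz => ?_⟩
    have := (hg' z hz.1.1).hasFDerivAt (mem_interior_iff_mem_nhds.1 hz.2)
    rw [this.fderiv]
    exact hz.1.2.le

/-- If the time derivative of `u` has spatial gradient bounded by `C`, then the spatial gradient of
`u` is `C`-Lipschitz in time. -/
lemma norm_fderiv_sub_fderiv_le {E : Type*} [NormedAddCommGroup E] [NormedSpace ℝ E]
    {Ω : Set E} (hΩ : IsOpen Ω) {T C : ℝ} {u : E → ℝ → ℝ}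
    (hcont : ∀ x ∈ Ω, ContinuousOn (u x) (Icc 0 T))
    (hdiff : ∀ x ∈ Ω, ∀ t ∈ Ioo 0 T, DifferentiableAt ℝ (u x) t)
    (hdd : ∀ x ∈ Ω, ∀ t ∈ Ioo 0 T,
      DifferentiableAt ℝ (fun q : E × ℝ => deriv (u q.1) q.2) (x, t))
    (hC : ∀ x ∈ Ω, ∀ t ∈ Ioo 0 T, ‖fderiv ℝ (fun q : E × ℝ => deriv (u q.1) q.2) (x, t)‖ ≤ C)
    (hC0 : 0 ≤ C)
    {x : E} (hx : x ∈ Ω) {t₁ t₂ : ℝ} (h0 : 0 ≤ t₁) (h12 : t₁ ≤ t₂) (h2 : t₂ ≤ T)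
    (hd₁ : DifferentiableAt ℝ (fun y => u y t₁) x)
    (hd₂ : DifferentiableAt ℝ (fun y => u y t₂) x) :
    ‖fderiv ℝ (fun y => u y t₂) x - fderiv ℝ (fun y => u y t₁) x‖ ≤ C * (t₂ - t₁) := by
  obtain ⟨ε, hε, hball⟩ := Metric.isOpen_iff.1 hΩ x hx
  rw [← fderiv_fun_sub hd₂ hd₁]
  refine norm_fderiv_le_of_lip' ℝ (mul_nonneg hC0 (sub_nonneg.2 h12)) ?_
  filter_upwards [Metric.ball_mem_nhds x hε] with y hy
  have hv : ∀ t ∈ Ioo 0 T, ‖deriv (u y) t - deriv (u x) t‖ ≤ C * ‖y - x‖ := fun t ht => by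
    refine (convex_ball x ε).norm_image_sub_le_of_norm_hasFDerivWithin_le
      (f := fun w => deriv (u w) t)
      (f' := fun w => (fderiv ℝ (fun q : E × ℝ => deriv (u q.1) q.2) (w, t)).comp
        (ContinuousLinearMap.inl ℝ E ℝ)) (fun w hw => ?_) (fun w hw => ?_)
      (mem_ball_self hε) hy
    · exact (HasFDerivAt.comp (f := fun e : E => (e, t)) w (hdd w (hball hw) t ht).hasFDerivAt
        (hasFDerivAt_prodMk_left w t)).hasFDerivWithinAt
    · refine (ContinuousLinearMap.opNorm_comp_le _ _).trans ?_
      have h1 := hC w (hball hw) t ht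
      have h3 := ContinuousLinearMap.norm_inl_le_one ℝ E ℝ
      calc _ ≤ C * 1 := mul_le_mul h1 h3 (norm_nonneg _) hC0
        _ = C := mul_one C
  rcases h12.eq_or_lt with rfl | hlt
  · simp
  have hsub : Icc t₁ t₂ ⊆ Icc 0 T := Icc_subset_Icc h0 h2
  obtain ⟨t, ht, hteq⟩ := exists_hasDerivAt_eq_slope (fun t => u y t - u x t)
    (fun t => deriv (u y) t - deriv (u x) t) hlt
    (((hcont y (hball hy)).mono hsub).sub ((hcont x hx).mono hsub)) fun t ht =>
      have ht' : t ∈ Ioo 0 T := ⟨h0.trans_lt ht.1, ht.2.trans_le h2⟩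
      (hdiff y (hball hy) t ht').hasDerivAt.sub (hdiff x hx t ht').hasDerivAt
  have hvt := hv t ⟨h0.trans_lt ht.1, ht.2.trans_le h2⟩
  have hpos : 0 < t₂ - t₁ := sub_pos.2 hlt
  rw [hteq, norm_div, Real.norm_of_nonneg hpos.le, div_le_iff₀ hpos] at hvt
  calc _ = ‖u y t₂ - u x t₂ - (u y t₁ - u x t₁)‖ := by congr 1; ring
    _ ≤ _ := hvt
    _ = _ := by ring

/-- The chain rule along a space-time curve moving with unit speed in time. -/
lemma hasDerivAt_along_curve {E : Type*} [NormedAddCommGroup E] [NormedSpace ℝ E]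
    {u : E → ℝ → ℝ} {Y : ℝ → E} {v : E} {r h : ℝ} (hY : HasDerivAt Y v r)
    (hu : DifferentiableAt ℝ (fun q : E × ℝ => u q.1 q.2) (Y r, r + h)) :
    HasDerivAt (fun s => u (Y s) (s + h))
      (deriv (u (Y r)) (r + h) + fderiv ℝ (fun y => u y (r + h)) (Y r) v) r := by
  have h1 : HasFDerivAt (fun y => u y (r + h)) _ (Y r) :=
    HasFDerivAt.comp (f := fun e : E => (e, r + h)) (Y r) hu.hasFDerivAt
      (hasFDerivAt_prodMk_left (Y r) (r + h))
  have h2 : HasFDerivAt (fun t => u (Y r) t) _ (r + h) :=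
    HasFDerivAt.comp (f := fun t : ℝ => (Y r, t)) (r + h) hu.hasFDerivAt
      (hasFDerivAt_prodMk_right (Y r) (r + h))
  have h3 : HasDerivAt (fun s => (Y s, s + h)) (v, 1) r :=
    hY.prodMk ((hasDerivAt_id r).add_const h)
  have h4 := hu.hasFDerivAt.comp_hasDerivAt r h3
  have h5 : deriv (u (Y r)) (r + h) + fderiv ℝ (fun y => u y (r + h)) (Y r) v =
      fderiv ℝ (fun q : E × ℝ => u q.1 q.2) (Y r, r + h) (v, 1) := by
    rw [h1.fderiv, h2.hasDerivAt.deriv]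
    simp only [ContinuousLinearMap.comp_apply, ContinuousLinearMap.inl_apply,
      ContinuousLinearMap.inr_apply, ← map_add]
    simp
  rw [h5]
  exact h4

/-- `u` is a classical solution on `Ω × (0, T)` of the transport equation with drift `H`, potential
`p` and initial value `a`, continuous up to the boundary, and with spatial gradient `C`-Lipschitz in
time. -/
structure IsTransportSolution {E : Type*} [NormedAddCommGroup E] [NormedSpace ℝ E]
    (Ω : Set E) (T C : ℝ) (H : E → E) (p a : E → ℝ) (u : E → ℝ → ℝ) : Prop where
  continuousOn : ContinuousOn (fun q : E × ℝ => u q.1 q.2) (closure Ω ×ˢ Icc 0 T)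
  differentiableAt : ∀ x ∈ Ω, ∀ t ∈ Ioo 0 T,
    DifferentiableAt ℝ (fun q : E × ℝ => u q.1 q.2) (x, t)
  equation : ∀ x ∈ Ω, ∀ t ∈ Ioo 0 T,
    deriv (u x) t + fderiv ℝ (fun y => u y t) x (H x) + p x * u x t = 0
  initial : ∀ x ∈ Ω, u x 0 = a x
  gradient_lipschitz : ∀ x ∈ Ω, ∀ t₁ t₂, 0 ≤ t₁ → t₁ ≤ t₂ → t₂ < T →
    ‖fderiv ℝ (fun y => u y t₂) x - fderiv ℝ (fun y => u y t₁) x‖ ≤ C * (t₂ - t₁)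

namespace IsTransportSolution

variable {E : Type*} [NormedAddCommGroup E] [NormedSpace ℝ E] {Ω : Set E} {T C : ℝ}
  {H H₁ H₂ : E → E} {p a : E → ℝ} {u u₁ u₂ : E → ℝ → ℝ}

lemma tendsto_fderiv (hu : IsTransportSolution Ω T C H p a u) (hΩ : IsOpen Ω) (hT : 0 < T) {x : E}
    (hx : x ∈ Ω) :
    Tendsto (fun t => fderiv ℝ (fun y => u y t) x) (𝓝[>] 0) (𝓝 (fderiv ℝ a x)) := by
  have h0 : fderiv ℝ (fun y => u y 0) x = fderiv ℝ a x :=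
    (show (fun y => u y 0) =ᶠ[𝓝 x] a from
      (hΩ.eventually_mem hx).mono fun y hy => hu.initial y hy).fderiv_eq
  rw [← h0, tendsto_iff_norm_sub_tendsto_zero]
  refine squeeze_zero' (g := fun t => C * (t - 0)) (Eventually.of_forall fun _ => norm_nonneg _) ?_
    ?_
  · filter_upwards [Ioo_mem_nhdsGT hT] with t ht
    exact hu.gradient_lipschitz x hx 0 t le_rfl ht.1.le ht.2
  · exact (Continuous.tendsto' (by fun_prop) 0 0 (by simp)).mono_left nhdsWithin_le_nhds

lemma continuousOn_time (hu : IsTransportSolution Ω T C H p a u) {x : E} (hx : x ∈ closure Ω) :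
    ContinuousOn (u x) (Icc 0 T) :=
  hu.continuousOn.comp (f := fun t => (x, t)) (by fun_prop) fun _ ht => ⟨hx, ht⟩

lemma differentiableAt_time (hu : IsTransportSolution Ω T C H p a u) {x : E} (hx : x ∈ Ω) {t : ℝ}
    (ht : t ∈ Ioo 0 T) : DifferentiableAt ℝ (u x) t :=
  DifferentiableAt.comp (f := fun t : ℝ => (x, t)) t (hu.differentiableAt x hx t ht)
    (by fun_prop)

/-- The time derivative at `t = 0` of the difference of two solutions with the same initial value
is controlled by any linear bound on this difference. -/
lemma abs_fderiv_initial_le (hu₁ : IsTransportSolution Ω T C H₁ p a u₁)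
    (hu₂ : IsTransportSolution Ω T C H₂ p a u₂) (hΩ : IsOpen Ω) (hT : 0 < T) {x : E}
    (hx : x ∈ Ω) {S b : ℝ} (hS : 0 < S) (hb : ∀ h ∈ Ioo 0 S, |u₁ x h - u₂ x h| ≤ b * h) :
    |fderiv ℝ a x (H₁ x - H₂ x)| ≤ b := by
  have hxc := subset_closure hx
  have h0T : (0 : ℝ) ∈ Icc 0 T := ⟨le_rfl, hT.le⟩
  have hIoo : Ioo 0 T ∈ 𝓝[>] (0 : ℝ) := Ioo_mem_nhdsGT hT
  have huc : ∀ {v : E → ℝ → ℝ} {H : E → E}, IsTransportSolution Ω T C H p a v →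
      Tendsto (v x) (𝓝[>] 0) (𝓝 (a x)) := fun {v H} hv => by
    have h1 := ((hv.continuousOn_time hxc) 0 h0T).mono Ioc_subset_Icc_self
    rwa [ContinuousWithinAt, nhdsWithin_Ioc_eq_nhdsGT hT, hv.initial x hx] at h1
  have hlim : Tendsto (fun t => deriv (fun s => u₁ x s - u₂ x s) t) (𝓝[>] 0)
      (𝓝 (-(fderiv ℝ a x (H₁ x) + p x * a x) + (fderiv ℝ a x (H₂ x) + p x * a x))) := by
    have h1 : ∀ {v : E → ℝ → ℝ} {H : E → E}, IsTransportSolution Ω T C H p a v →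
        Tendsto (fun t => fderiv ℝ (fun y => v y t) x (H x) + p x * v x t) (𝓝[>] 0)
          (𝓝 (fderiv ℝ a x (H x) + p x * a x)) := fun {v H} hv =>
      (((ContinuousLinearMap.apply ℝ ℝ (H x)).continuous.tendsto _).comp
        (hv.tendsto_fderiv hΩ hT hx)).add ((huc hv).const_mul _)
    refine ((h1 hu₁).neg.add (h1 hu₂)).congr' ?_
    filter_upwards [hIoo] with t ht
    rw [deriv_fun_sub (hu₁.differentiableAt_time hx ht) (hu₂.differentiableAt_time hx ht)]
    linarith [hu₁.equation x hx t ht, hu₂.equation x hx t ht]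
  have hder := hasDerivWithinAt_Ici_of_tendsto_deriv (s := Ioo 0 T) (a := 0)
    (f := fun s => u₁ x s - u₂ x s)
    (fun t ht => ((hu₁.differentiableAt_time hx ht).sub
      (hu₂.differentiableAt_time hx ht)).differentiableWithinAt)
    ((((hu₁.continuousOn_time hxc).sub (hu₂.continuousOn_time hxc)) 0 h0T).mono
      Ioo_subset_Icc_self) hIoo hlim
  have hslope := (hasDerivWithinAt_iff_tendsto_slope' (s := Ioi 0) (by simp)).1
    (hder.mono Ioi_subset_Ici_self)
  have heq : |fderiv ℝ a x (H₁ x - H₂ x)| =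
      |-(fderiv ℝ a x (H₁ x) + p x * a x) + (fderiv ℝ a x (H₂ x) + p x * a x)| := by
    rw [map_sub, ← abs_neg]
    congr 1
    ring
  rw [heq]
  refine le_of_tendsto hslope.abs ?_
  filter_upwards [Ioo_mem_nhdsGT hS] with h hh
  rw [slope_def_field, hu₁.initial x hx, hu₂.initial x hx, sub_self, sub_zero, sub_zero, abs_div,
    abs_of_pos hh.1, div_le_iff₀ hh.1]
  exact hb h hh

/-- Along a characteristic curve that ends at a point where two solutions agree, an exponential bound
on the difference of the drifts gives a bound on this difference at the starting point, tested
against the gradient of the initial value. -/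
lemma abs_fderiv_initial_le_of_curve (hu₁ : IsTransportSolution Ω T C H₁ p a u₁)
    (hu₂ : IsTransportSolution Ω T C H₂ p a u₂) (hΩ : IsOpen Ω) (hC : 0 < C) {P : ℝ}
    (hp : ∀ x ∈ Ω, |p x| ≤ P) {Y : ℝ → E} {σ : ℝ} (hσ : σ ∈ Ioo 0 T)
    (hYΩ : ∀ r ∈ Ico 0 σ, Y r ∈ Ω) (hYc : ContinuousOn Y (Icc 0 σ))
    (hYd : ∀ r ∈ Ioo 0 σ, HasDerivAt Y (H₁ (Y r)) r) (hYσ : Y σ ∈ closure Ω)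
    (hagree : ∀ t ∈ Ioo 0 T, u₁ (Y σ) t = u₂ (Y σ) t) {lam B : ℝ} (hlam : P < lam) (hB : 0 < B)
    (hbound : ∀ r ∈ Ioo 0 σ, ‖H₁ (Y r) - H₂ (Y r)‖ ≤ B * Real.exp (-lam * r)) :
    |fderiv ℝ a (Y 0) (H₁ (Y 0) - H₂ (Y 0))| ≤ 2 * (C * B) / (lam - P) := by
  have h0 : Y 0 ∈ Ω := hYΩ 0 ⟨le_rfl, hσ.1⟩
  refine hu₁.abs_fderiv_initial_le hu₂ hΩ (hσ.1.trans hσ.2) h0 (sub_pos.2 hσ.2) fun h hh => ?_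
  have hYcl : ∀ r ∈ Icc 0 σ, Y r ∈ closure Ω := fun r hr => by
    rcases hr.2.eq_or_lt with rfl | hlt
    · exact hYσ
    · exact subset_closure (hYΩ r ⟨hr.1, hlt⟩)
  set w : ℝ → ℝ → ℝ := fun g r => u₁ (Y r) (r + g) - u₂ (Y r) (r + g) with hw
  have hwc : ∀ g, 0 ≤ g → g < T - σ → ContinuousOn (w g) (Icc 0 σ) := fun g hg hgT => by
    have h1 : ContinuousOn (fun r => (Y r, r + g)) (Icc 0 σ) := hYc.prodMk (by fun_prop)
    have h2 : MapsTo (fun r => (Y r, r + g)) (Icc 0 σ) (closure Ω ×ˢ Icc 0 T) := fun r hr =>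
      ⟨hYcl r hr, by linarith [hr.1], by linarith [hr.2]⟩
    exact (hu₁.continuousOn.comp h1 h2).sub (hu₂.continuousOn.comp h1 h2)
  have hwd : ∀ g, 0 ≤ g → g < T - σ → ∀ r ∈ Ioo 0 σ, HasDerivAt (w g) (-(p (Y r) * w g r) -
      fderiv ℝ (fun y => u₂ y (r + g)) (Y r) (H₁ (Y r) - H₂ (Y r))) r := fun g hg hgT r hr => by
    have hrΩ := hYΩ r ⟨hr.1.le, hr.2⟩
    have hrg : r + g ∈ Ioo 0 T := ⟨by linarith [hr.1], by linarith [hr.2]⟩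
    have h1 := hasDerivAt_along_curve (hYd r hr) (hu₁.differentiableAt _ hrΩ _ hrg)
    have h2 := hasDerivAt_along_curve (hYd r hr) (hu₂.differentiableAt _ hrΩ _ hrg)
    convert! h1.sub h2 using 1
    rw [map_sub]
    simp only [hw]
    linarith [hu₁.equation _ hrΩ _ hrg, hu₂.equation _ hrΩ _ hrg]
  have hh' : h < T - σ := hh.2
  have h0' : (0 : ℝ) < T - σ := sub_pos.2 hσ.2
  have key := abs_le_of_abs_deriv_le_exp (z := fun r => w h r - w 0 r) (σ := σ) (P := P)
    (B := C * h * B) (lam := lam) hσ.1 (mul_pos (mul_pos hC hh.1) hB) hlam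
    ((hwc h hh.1.le hh').sub (hwc 0 le_rfl h0')) ?_
    (fun r hr => (hwd h hh.1.le hh' r hr).sub (hwd 0 le_rfl h0' r hr)) (fun r hr => ?_)
  · simp only [hw, zero_add, add_zero, hu₁.initial _ h0, hu₂.initial _ h0, sub_self,
      sub_zero] at key
    refine key.trans (le_of_eq ?_)
    ring
  · have h1 := hagree (σ + h) ⟨by linarith [hσ.1, hh.1], by linarith⟩
    have h2 := hagree σ hσ
    simp [hw, h1, h2]
  · have hrΩ := hYΩ r ⟨hr.1.le, hr.2⟩
    have hg := hu₂.gradient_lipschitz _ hrΩ (r + 0) (r + h) (by linarith [hr.1])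
      (by linarith [hh.1]) (by linarith [hr.2])
    have hg' : ‖(fderiv ℝ (fun y => u₂ y (r + h)) (Y r) - fderiv ℝ (fun y => u₂ y (r + 0)) (Y r))
        (H₁ (Y r) - H₂ (Y r))‖ ≤ C * h * (B * Real.exp (-lam * r)) := by
      refine (ContinuousLinearMap.le_opNorm _ _).trans ?_
      refine mul_le_mul (hg.trans (le_of_eq (by ring))) (hbound r hr) (norm_nonneg _) ?_
      exact (mul_pos hC hh.1).le
    have hpr : |p (Y r) * (w h r - w 0 r)| ≤ P * |w h r - w 0 r| := by
      rw [abs_mul]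
      exact mul_le_mul_of_nonneg_right (hp _ hrΩ) (abs_nonneg _)
    rw [Real.norm_eq_abs, sub_apply] at hg'
    rw [abs_le] at hg' hpr ⊢
    constructor <;> nlinarith [hg'.1, hg'.2, hpr.1, hpr.2]

end IsTransportSolution

/-- Two drifts agree along a characteristic curve that ends at a point where the corresponding
solutions agree, provided the gradients of the initial values are uniformly nondegenerate along
the curve. -/
lemma drift_eq_of_curve {E ι : Type*} [NormedAddCommGroup E] [NormedSpace ℝ E] {Ω : Set E}
    (hΩ : IsOpen Ω) {T C P κ m : ℝ} (hC : 0 < C) (hκ : 0 < κ) {H₁ H₂ : E → E} {p : E → ℝ}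
    (hp : ∀ x ∈ Ω, |p x| ≤ P) {a : ι → E → ℝ} {u₁ u₂ : ι → E → ℝ → ℝ}
    (hu₁ : ∀ k, IsTransportSolution Ω T C H₁ p (a k) (u₁ k))
    (hu₂ : ∀ k, IsTransportSolution Ω T C H₂ p (a k) (u₂ k))
    {X : ℝ → E} {τ : ℝ} (hτ : τ ∈ Ioo 0 T)
    (hXΩ : ∀ s ∈ Ico 0 τ, X s ∈ Ω) (hXτ : X τ ∈ closure Ω)
    (hXd : ∀ s ∈ Icc 0 τ, HasDerivWithinAt X (H₁ (X s)) (Icc 0 τ) s)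
    (hagree : ∀ k, ∀ t ∈ Ioo 0 T, u₁ k (X τ) t = u₂ k (X τ) t)
    (hnd : ∀ s ∈ Ico 0 τ, ∀ (e : E) (b : ℝ), (∀ k, |fderiv ℝ (a k) (X s) e| ≤ b) → ‖e‖ ≤ κ * b)
    (hm : ∀ s ∈ Ico 0 τ, ‖H₁ (X s) - H₂ (X s)‖ ≤ m) :
    ∀ s ∈ Ico 0 τ, H₁ (X s) = H₂ (X s) := by
  set lam : ℝ := |P| + 4 * κ * C with hlam
  have hκC : 0 < κ * C := mul_pos hκ hC
  have hXc : ContinuousOn X (Icc 0 τ) := fun t ht => (hXd t ht).continuousWithinAt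
  have hPlam : P < lam := by rw [hlam]; linarith [le_abs_self P]
  have hlam0 : 0 < lam := by rw [hlam]; linarith [abs_nonneg P]
  have hstep : ∀ B > 0, (∀ s ∈ Ico 0 τ, ‖H₁ (X s) - H₂ (X s)‖ ≤ B * Real.exp (-lam * s)) →
      ∀ s ∈ Ico 0 τ, ‖H₁ (X s) - H₂ (X s)‖ ≤ B / 2 * Real.exp (-lam * s) := by
    intro B hB hbd s hs
    set b : ℝ := B * Real.exp (-lam * s) with hb
    have hb0 : 0 < b := by positivity
    have hsub : ∀ r ∈ Icc 0 (τ - s), s + r ∈ Icc 0 τ := fun r hr =>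
      ⟨by linarith [hr.1, hs.1], by linarith [hr.2]⟩
    have h1 : ∀ k, |fderiv ℝ (a k) (X s) (H₁ (X s) - H₂ (X s))| ≤ 2 * (C * b) / (lam - P) := by
      intro k
      have := (hu₁ k).abs_fderiv_initial_le_of_curve (hu₂ k) hΩ hC hp (Y := fun r => X (s + r))
        (σ := τ - s) ⟨by linarith [hs.2], by linarith [hs.1, hτ.2]⟩
        (fun r hr => hXΩ _ ⟨by linarith [hr.1, hs.1], by linarith [hr.2]⟩)
        (hXc.comp (by fun_prop) hsub)
        (fun r hr => ?_) (by simpa using hXτ) (by simpa using hagree k) hPlam hb0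
        (fun r hr => ?_)
      · simpa using this
      · have h2 := (hXd (s + r) (hsub r (Ioo_subset_Icc_self hr))).hasDerivAt
          (Icc_mem_nhds (by linarith [hr.1, hs.1]) (by linarith [hr.2]))
        exact h2.comp_const_add s r
      · refine (hbd (s + r) ⟨by linarith [hr.1, hs.1], by linarith [hr.2]⟩).trans (le_of_eq ?_)
        rw [hb, mul_assoc, ← Real.exp_add]
        congr 2
        ring
    refine (hnd s hs _ _ h1).trans ?_
    have h3 : 4 * (κ * C) ≤ lam - P := by rw [hlam]; linarith [le_abs_self P]
    rw [← mul_div_assoc, div_le_iff₀ (by linarith)]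
    have : B / 2 * Real.exp (-lam * s) = b / 2 := by rw [hb]; ring
    rw [this]
    nlinarith
  set B₀ : ℝ := (|m| + 1) * Real.exp (lam * τ) with hB₀
  have hB₀pos : 0 < B₀ := by positivity
  have hiter : ∀ j : ℕ, ∀ s ∈ Ico 0 τ,
      ‖H₁ (X s) - H₂ (X s)‖ ≤ B₀ * (1 / 2) ^ j * Real.exp (-lam * s) := by
    intro j
    induction j with
    | zero =>
      intro s hs
      have h1 : 1 ≤ Real.exp (lam * τ) * Real.exp (-lam * s) := by
        rw [← Real.exp_add]
        exact Real.one_le_exp (by nlinarith [hs.2])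
      have h2 := hm s hs
      calc _ ≤ (|m| + 1) * 1 := by linarith [le_abs_self m]
        _ ≤ (|m| + 1) * (Real.exp (lam * τ) * Real.exp (-lam * s)) := by gcongr
        _ = _ := by rw [hB₀]; ring
    | succ j ih =>
      intro s hs
      refine (hstep _ (by positivity) ih s hs).trans (le_of_eq ?_)
      ring
  intro s hs
  have hlim : Tendsto (fun j : ℕ => B₀ * (1 / 2) ^ j * Real.exp (-lam * s)) atTop (𝓝 0) := by
    have := (tendsto_pow_atTop_nhds_zero_of_lt_one (r := (1 / 2 : ℝ)) (by norm_num)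
      (by norm_num)).const_mul B₀ |>.mul_const (Real.exp (-lam * s))
    simpa using this
  have := ge_of_tendsto' hlim fun j => hiter j s hs
  exact sub_eq_zero.1 (norm_le_zero_iff.1 this)

/-- A continuous family of linear maps, injective at each point of a compact set, is uniformly
injective there. -/
lemma exists_norm_le_mul_of_injective {E ι : Type*} [NormedAddCommGroup E] [NormedSpace ℝ E]
    [FiniteDimensional ℝ E] [Fintype ι] [Nonempty ι] {Q : Set E} (hQ : IsCompact Q)
    {A : ι → E → E →L[ℝ] ℝ} (hA : ∀ k, ContinuousOn (A k) Q)
    (hinj : ∀ x ∈ Q, ∀ e, (∀ k, A k x e = 0) → e = 0) :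
    ∃ κ > 0, ∀ x ∈ Q, ∀ (e : E) (b : ℝ), (∀ k, |A k x e| ≤ b) → ‖e‖ ≤ κ * b := by
  have hcont : ContinuousOn (fun q : E × E => ∑ k, |A k q.1 q.2|) (Q ×ˢ sphere 0 1) := by
    refine continuousOn_finsetSum _ fun k _ => ContinuousOn.abs ?_
    exact ((hA k).comp continuousOn_fst fun q hq => hq.1).clm_apply continuousOn_snd
  obtain ⟨μ, hμ, hμle⟩ := (hQ.prod (isCompact_sphere (0 : E) 1)).exists_forall_le' hcont (a := 0)
    fun q hq => by
      refine (Finset.sum_nonneg fun k _ => abs_nonneg _).lt_of_ne fun h => ?_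
      have h1 := (Finset.sum_eq_zero_iff_of_nonneg fun k _ => abs_nonneg _).1 h.symm
      have h2 := hinj q.1 hq.1 q.2 fun k => abs_eq_zero.1 (h1 k (Finset.mem_univ k))
      have h3 : ‖q.2‖ = 1 := by simpa using hq.2
      simp [h2] at h3
  have hcard : (0 : ℝ) < Fintype.card ι := by exact_mod_cast Fintype.card_pos
  refine ⟨Fintype.card ι / μ, by positivity, fun x hx e b hb => ?_⟩
  rcases eq_or_ne e 0 with rfl | he
  · have hb0 : 0 ≤ b := (abs_nonneg _).trans (hb (Classical.arbitrary ι))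
    rw [norm_zero]
    positivity
  have hn : 0 < ‖e‖ := norm_pos_iff.2 he
  have h1 := hμle (x, ‖e‖⁻¹ • e) ⟨hx, by simp [norm_smul, hn.ne']⟩
  simp only [map_smul, smul_eq_mul, abs_mul, abs_inv, abs_norm, ← Finset.mul_sum] at h1
  have h2 : ∑ k, |A k x e| ≤ Fintype.card ι * b := by
    refine (Finset.sum_le_sum fun k _ => hb k).trans ?_
    simp
  rw [inv_mul_eq_div, le_div_iff₀ hn] at h1
  rw [div_mul_eq_mul_div, le_div_iff₀ hμ]
  linarith

/-- `graphMk` as a continuous linear equivalence. -/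
def graphEquiv (d : ℕ) : (Esp d × ℝ) ≃L[ℝ] Esp (d + 1) :=
  LinearEquiv.toContinuousLinearEquiv
    { toFun := fun q => graphMk d q.1 q.2
      invFun := fun x => (WithLp.toLp 2 fun i : Fin d => x i.castSucc, x (Fin.last d))
      map_add' := fun q q' => by
        ext i
        refine Fin.lastCases ?_ (fun i => ?_) i <;> simp [graphMk]
      map_smul' := fun s q => by
        ext i
        refine Fin.lastCases ?_ (fun i => ?_) i <;> simp [graphMk]
      left_inv := fun q => by
        ext i <;> simp [graphMk]
      right_inv := fun x => by
        ext i
        refine Fin.lastCases ?_ (fun i => ?_) i <;> simp [graphMk] }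

@[simp]
lemma graphEquiv_apply (d : ℕ) (q : Esp d × ℝ) : graphEquiv d q = graphMk d q.1 q.2 := rfl

@[simp]
lemma graphEquiv_symm_graphMk (d : ℕ) (x' : Esp d) (xn : ℝ) :
    (graphEquiv d).symm (graphMk d x' xn) = (x', xn) :=
  (graphEquiv d).symm_apply_apply (x', xn)

lemma graphMk_symm (d : ℕ) (x : Esp (d + 1)) :
    graphMk d ((graphEquiv d).symm x).1 ((graphEquiv d).symm x).2 = x :=
  (graphEquiv d).apply_symm_apply x

lemma graphMk_zero (d : ℕ) : graphMk d 0 0 = 0 := (graphEquiv d).map_zero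

lemma inner_graphMk (d : ℕ) (x : Esp (d + 1)) (y' : Esp d) (yn : ℝ) :
    ⟪x, graphMk d y' yn⟫ =
      ⟪((graphEquiv d).symm x).1, y'⟫ + ((graphEquiv d).symm x).2 * yn := by
  conv_lhs => rw [← graphMk_symm d x]
  simp [graphMk, PiLp.inner_apply, Fin.sum_univ_castSucc, mul_comm]

/-- The height of a point above the graph of `ℓ`. -/
def graphHeight (d : ℕ) (ℓ : Esp d → ℝ) (x : Esp (d + 1)) : ℝ :=
  ((graphEquiv d).symm x).2 - ℓ ((graphEquiv d).symm x).1

lemma graphHeight_graphMk (d : ℕ) (ℓ : Esp d → ℝ) (x' : Esp d) (xn : ℝ) :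
    graphHeight d ℓ (graphMk d x' xn) = xn - ℓ x' := by
  simp [graphHeight]

lemma contDiffAt_graphHeight {d : ℕ} {ℓ : Esp d → ℝ} (hℓ : ContDiffAt ℝ 1 ℓ 0) :
    ContDiffAt ℝ 1 (graphHeight d ℓ) 0 := by
  have h1 : ContDiff ℝ 1 (graphEquiv d).symm := (graphEquiv d).symm.contDiff
  refine h1.snd.contDiffAt.sub (ContDiffAt.comp _ ?_ h1.fst.contDiffAt)
  simpa using hℓ

/-- The derivative of the height at the origin dominates the normal component. -/
lemma inner_nuUp_lt_fderiv_graphHeight {d : ℕ} {ℓ : Esp d → ℝ} (hℓ : DifferentiableAt ℝ ℓ 0)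
    {v : Esp (d + 1)} {δ : ℝ} (hδ : 0 < δ) (h : δ < ⟪v, nuUp d ℓ 0⟫) :
    δ < fderiv ℝ (graphHeight d ℓ) 0 v := by
  have h1 : HasFDerivAt (graphEquiv d).symm
      ((graphEquiv d).symm : Esp (d + 1) →L[ℝ] Esp d × ℝ) 0 := (graphEquiv d).symm.hasFDerivAt
  have h2 : HasFDerivAt ℓ (fderiv ℝ ℓ 0) ((graphEquiv d).symm 0).1 := by
    simpa using hℓ.hasFDerivAt
  have h3 : HasFDerivAt (graphHeight d ℓ) _ 0 :=
    h1.snd.sub (HasFDerivAt.comp (f := fun x => ((graphEquiv d).symm x).1) 0 h2 h1.fst)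
  have h4 : fderiv ℝ (graphHeight d ℓ) 0 v = ⟪v, graphMk d (-(gradient ℓ 0)) 1⟫ := by
    rw [h3.fderiv, inner_graphMk, inner_neg_right, real_inner_comm, inner_gradient_left]
    simp
    ring
  set s : ℝ := Real.sqrt (1 + ‖gradient ℓ 0‖ ^ 2) with hs
  have hs1 : 1 ≤ s := by
    rw [hs, Real.one_le_sqrt]
    nlinarith [sq_nonneg ‖gradient ℓ 0‖]
  rw [nuUp, inner_smul_right, ← h4, ← hs, inv_mul_eq_div, lt_div_iff₀ (by linarith)] at h
  nlinarith

/-- The one-sided neighbourhood below a piece of the graph of `ℓ`, including the graph itself. -/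
def graphCollar (d : ℕ) (ρ c : ℝ) (ℓ : Esp d → ℝ) : Set (Esp (d + 1)) :=
  (fun q : Esp d × ℝ => graphMk d q.1 (ℓ q.1 + q.2)) '' (ball 0 ρ ×ˢ Ioc (-c) 0)

lemma mem_graphCollar {d : ℕ} {ρ c : ℝ} {ℓ : Esp d → ℝ} {x : Esp (d + 1)}
    (h1 : ‖((graphEquiv d).symm x).1‖ < ρ) (h2 : -c < graphHeight d ℓ x)
    (h3 : graphHeight d ℓ x ≤ 0) : x ∈ graphCollar d ρ c ℓ := by
  refine ⟨(((graphEquiv d).symm x).1, graphHeight d ℓ x), ⟨by simpa using h1, h2, h3⟩, ?_⟩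
  simp only [graphHeight, add_sub_cancel]
  exact graphMk_symm d x

lemma uniqueDiffOn_graphCollar {d : ℕ} {ρ c : ℝ} {ℓ : Esp d → ℝ}
    (hℓ : ∀ x ∈ ball (0 : Esp d) ρ, DifferentiableAt ℝ ℓ x) :
    UniqueDiffOn ℝ (graphCollar d ρ c ℓ) := by
  have hs : UniqueDiffOn ℝ (ball (0 : Esp d) ρ ×ˢ Ioc (-c) 0) :=
    isOpen_ball.uniqueDiffOn.prod (uniqueDiffOn_Ioc _ _)
  refine hs.image (f' := fun q => (graphEquiv d : Esp d × ℝ →L[ℝ] Esp (d + 1)).comp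
    ((ContinuousLinearMap.fst ℝ (Esp d) ℝ).prod
      ((fderiv ℝ ℓ q.1).comp (ContinuousLinearMap.fst ℝ (Esp d) ℝ) +
        ContinuousLinearMap.snd ℝ (Esp d) ℝ))) (fun q hq => ?_) (fun q hq => ?_)
  · have h1 : HasFDerivAt (fun q : Esp d × ℝ => (q.1, ℓ q.1 + q.2)) _ q :=
      hasFDerivAt_fst.prodMk
        (((hℓ q.1 hq.1).hasFDerivAt.comp q hasFDerivAt_fst).add hasFDerivAt_snd)
    exact ((graphEquiv d).hasFDerivAt.comp q h1).hasFDerivWithinAt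
  · refine Function.Surjective.denseRange fun x => ?_
    refine ⟨(((graphEquiv d).symm x).1,
      ((graphEquiv d).symm x).2 - fderiv ℝ ℓ q.1 ((graphEquiv d).symm x).1), ?_⟩
    simp

lemma graphCollar_subset_closure {d : ℕ} {ρ c : ℝ} {ℓ : Esp d → ℝ}
    {Ω : Set (Esp (d + 1))} (hΩ : ∀ (x' : Esp d) (xn : ℝ), ‖x'‖ < ρ → ℓ x' - c < xn → xn < ℓ x' →
      graphMk d x' xn ∈ Ω) : graphCollar d ρ c ℓ ⊆ closure Ω := by
  rintro _ ⟨⟨x', y⟩, ⟨hx', hy⟩, rfl⟩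
  have hx'' : ‖x'‖ < ρ := by simpa using hx'
  have hcont : Continuous fun y : ℝ => graphMk d x' (ℓ x' + y) :=
    (graphEquiv d).continuous.comp (by fun_prop : Continuous fun y : ℝ => (x', ℓ x' + y))
  refine mem_closure_of_tendsto (b := 𝓝[<] y)
    ((hcont.tendsto y).mono_left nhdsWithin_le_nhds) ?_
  filter_upwards [Ioo_mem_nhdsLT hy.1] with z hz
  exact hΩ x' _ hx'' (by linarith [hz.1]) (by linarith [hz.2, hy.2])

lemma differentiableAt_of_det_gradient_ne_zero {n : ℕ} {a : Fin n → Esp n → ℝ} {x : Esp n}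
    (h : (Matrix.of fun (i k : Fin n) => gradient (a k) x i).det ≠ 0) (k : Fin n) :
    DifferentiableAt ℝ (a k) x := by
  by_contra hk
  refine h (Matrix.det_eq_zero_of_column_eq_zero k fun i => ?_)
  simp [gradient_eq_zero_of_not_differentiableAt hk]

lemma eq_zero_of_det_gradient_ne_zero {n : ℕ} {a : Fin n → Esp n → ℝ} {x : Esp n}
    (h : (Matrix.of fun (i k : Fin n) => gradient (a k) x i).det ≠ 0) {e : Esp n}
    (he : ∀ k, fderiv ℝ (a k) x e = 0) : e = 0 := by
  have := Matrix.eq_zero_of_vecMul_eq_zero h (v := fun i => e i) (by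
    ext k
    have hk := he k
    rw [← inner_gradient_left, PiLp.inner_apply] at hk
    simpa [Matrix.vecMul, dotProduct] using hk)
  ext i
  exact congrFun this i

lemma IsTransportSolution.mono {E : Type*} [NormedAddCommGroup E] [NormedSpace ℝ E]
    {Ω : Set E} {T C C' : ℝ} {H : E → E} {p a : E → ℝ} {u : E → ℝ → ℝ}
    (hu : IsTransportSolution Ω T C H p a u) (h : C ≤ C') :
    IsTransportSolution Ω T C' H p a u :=
  { hu with
    gradient_lipschitz := fun x hx t₁ t₂ h0 h12 h2 =>
      (hu.gradient_lipschitz x hx t₁ t₂ h0 h12 h2).trans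
        (mul_le_mul_of_nonneg_right h (sub_nonneg.2 h12)) }

lemma exists_isTransportSolution {n : ℕ} {Ω : Set (Esp n)} (hΩ : IsOpen Ω)
    (hΩb : Bornology.IsBounded Ω) {T : ℝ} {H : Esp n → Esp n} {p a : Esp n → ℝ}
    (ha : ∀ x ∈ Ω, DifferentiableAt ℝ a x) {u : Esp n → ℝ → ℝ}
    (hu : ContDiffOn ℝ 1 (fun q : Esp n × ℝ => u q.1 q.2) (closure Ω ×ˢ Icc 0 T))
    (hut : ContDiffOn ℝ 1 (fun q : Esp n × ℝ => deriv (u q.1) q.2) (closure Ω ×ˢ Icc 0 T))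
    (heq : ∀ x ∈ Ω, ∀ t ∈ Ioo 0 T,
      deriv (u x) t + ⟪H x, gradient (fun z => u z t) x⟫ + p x * u x t = 0)
    (hini : ∀ x ∈ Ω, u x 0 = a x) : ∃ C, IsTransportSolution Ω T C H p a u := by
  have hK : IsCompact (closure Ω ×ˢ Icc (0 : ℝ) T) := hΩb.isCompact_closure.prod isCompact_Icc
  obtain ⟨C, hC⟩ := exists_norm_fderiv_le_of_contDiffOn hK hut
  have hmem : ∀ x ∈ Ω, ∀ t ∈ Ioo 0 T, closure Ω ×ˢ Icc (0 : ℝ) T ∈ 𝓝 (x, t) := fun x hx t ht =>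
    prod_mem_nhds (mem_of_superset (hΩ.mem_nhds hx) subset_closure) (Icc_mem_nhds ht.1 ht.2)
  have hd : ∀ x ∈ Ω, ∀ t ∈ Ioo 0 T,
      DifferentiableAt ℝ (fun q : Esp n × ℝ => u q.1 q.2) (x, t) := fun x hx t ht =>
    (hu.contDiffAt (hmem x hx t ht)).differentiableAt (by norm_num)
  have hslice : ∀ x ∈ Ω, ∀ t, 0 ≤ t → t < T → DifferentiableAt ℝ (fun y => u y t) x := by
    intro x hx t ht0 htT
    rcases ht0.eq_or_lt with rfl | ht
    · exact (ha x hx).congr_of_eventuallyEq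
        ((hΩ.eventually_mem hx).mono fun y hy => hini y hy)
    · exact DifferentiableAt.comp (f := fun y : Esp n => (y, t)) x (hd x hx t ⟨ht, htT⟩)
        (by fun_prop)
  refine ⟨max C 0, hu.continuousOn, hd, fun x hx t ht => ?_, hini,
    fun x hx t₁ t₂ h0 h12 h2 => ?_⟩
  · have := heq x hx t ht
    rwa [real_inner_comm, inner_gradient_left] at this
  · refine norm_fderiv_sub_fderiv_le hΩ (T := T) (fun x hx => ?_) (fun x hx t ht => ?_)
      (fun x hx t ht => ?_) (fun x hx t ht => ?_) (le_max_right _ _) hx h0 h12 h2.le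
      (hslice x hx t₁ h0 (h12.trans_lt h2)) (hslice x hx t₂ (h0.trans h12) h2)
    · exact hu.continuousOn.comp (f := fun t => (x, t)) (by fun_prop)
        fun _ ht => ⟨subset_closure hx, ht⟩
    · exact DifferentiableAt.comp (f := fun t : ℝ => (x, t)) t (hd x hx t ht) (by fun_prop)
    · exact (hut.contDiffAt (hmem x hx t ht)).differentiableAt (by norm_num)
    · exact (hC _ (mem_interior_iff_mem_nhds.2 (hmem x hx t ht))).trans (le_max_left _ _)

/-- A bump that is positive in a ball and vanishes to first order on its boundary. -/
lemma exists_bump {d : ℕ} {ρ ε : ℝ} (hρ : 0 < ρ) (hε : 0 < ε) :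
    ∃ b : Esp d → ℝ, ContDiff ℝ 2 b ∧ (∀ x, ‖x‖ < ρ → 0 < b x ∧ b x ≤ ε) ∧
      ∀ x, ‖x‖ = ρ → b x = 0 ∧ gradient b x = 0 := by
  refine ⟨fun x => ε / ρ ^ 4 * (ρ ^ 2 - ‖x‖ ^ 2) ^ 2,
    contDiff_const.mul ((contDiff_const.sub (contDiff_norm_sq ℝ)).pow 2), fun x hx => ?_,
    fun x hx => ?_⟩
  · have h0 : ‖x‖ ^ 2 < ρ ^ 2 := by gcongr
    have h1 : 0 < ρ ^ 2 - ‖x‖ ^ 2 := sub_pos.2 h0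
    refine ⟨by positivity, ?_⟩
    have h2 : (ρ ^ 2 - ‖x‖ ^ 2) ^ 2 ≤ ρ ^ 4 := by
      calc (ρ ^ 2 - ‖x‖ ^ 2) ^ 2 ≤ (ρ ^ 2) ^ 2 := by
            gcongr
            linarith [sq_nonneg ‖x‖]
        _ = ρ ^ 4 := by ring
    beta_reduce
    rw [div_mul_eq_mul_div, div_le_iff₀ (by positivity)]
    gcongr
  · refine ⟨by simp [hx], ?_⟩
    have hmin : IsLocalMin (fun x : Esp d => ε / ρ ^ 4 * (ρ ^ 2 - ‖x‖ ^ 2) ^ 2) x :=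
      Eventually.of_forall fun y => by
        simp only [hx, sub_self, ne_eq, OfNat.ofNat_ne_zero, not_false_eq_true, zero_pow, mul_zero]
        positivity
    rw [gradient, hmin.fderiv_eq_zero, map_zero]

lemma IsAdmissible.exists_lipschitz_extension {n : ℕ} {M δ : ℝ} {K : Set (Esp n)}
    {H : Esp n → Esp n} (h : IsAdmissible M δ K H) :
    ∃ G : Esp n → Esp n,
      LipschitzWith (lipschitzExtensionConstant (Esp n) * M.toNNReal) G ∧ EqOn H G K := by
  obtain ⟨U, hUo, hUc, hKU, hH, -, hDH, -⟩ := h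
  have hlip : LipschitzOnWith M.toNNReal H U :=
    hUc.lipschitzOnWith_of_nnnorm_fderiv_le
      (fun x hx => (hH.contDiffAt (hUo.mem_nhds hx)).differentiableAt one_ne_zero)
      (fun x hx => NNReal.coe_le_coe.1 ((hDH x hx).trans (Real.le_coe_toNNReal M)))
  obtain ⟨G, hG, hHG⟩ := hlip.extend_finite_dimension
  exact ⟨G, hG, hHG.mono hKU⟩

lemma IsAdmissible.norm_le {n : ℕ} {M δ : ℝ} {K : Set (Esp n)} {H : Esp n → Esp n}
    (h : IsAdmissible M δ K H) {x : Esp n} (hx : x ∈ K) : ‖H x‖ ≤ M := by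
  obtain ⟨U, -, -, hKU, -, hHM, -⟩ := h
  exact hHM x (hKU hx)

/-- Functions with independent gradients are uniformly nondegenerate on compact subsets of the
collar. -/
lemma exists_norm_le_mul_of_subset_graphCollar {d : ℕ} {ρ c : ℝ} {ℓ : Esp d → ℝ}
    (hℓ : ∀ x ∈ ball (0 : Esp d) ρ, DifferentiableAt ℝ ℓ x)
    {a : Fin (d + 1) → Esp (d + 1) → ℝ} (ha : ∀ k, ContDiffOn ℝ 1 (a k) (graphCollar d ρ c ℓ))
    (hdet : ∀ x ∈ graphCollar d ρ c ℓ,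
      (Matrix.of fun (i k : Fin (d + 1)) => gradient (a k) x i).det ≠ 0)
    {Q : Set (Esp (d + 1))} (hQ : IsCompact Q) (hQs : Q ⊆ graphCollar d ρ c ℓ) :
    ∃ κ > 0, ∀ x ∈ Q, ∀ (e : Esp (d + 1)) (b : ℝ),
      (∀ k, |fderiv ℝ (a k) x e| ≤ b) → ‖e‖ ≤ κ * b := by
  refine exists_norm_le_mul_of_injective hQ (A := fun k => fderiv ℝ (a k)) (fun k => ?_)
    fun x hx e he => eq_zero_of_det_gradient_ne_zero (hdet x (hQs hx)) he
  have hu := uniqueDiffOn_graphCollar (c := c) hℓ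
  exact (((ha k).continuousOn_fderivWithin hu le_rfl).congr fun x hx =>
    ((differentiableAt_of_det_gradient_ne_zero (hdet x hx) k).fderivWithin (hu x hx)).symm).mono hQs

/-- **Corollary** (local uniqueness for the inverse drift problem). -/
theorem corollary_local_uniqueness_inverse_drift
    (d : ℕ) (hd : 1 ≤ d) (T ρ₀ M δ₀ c : ℝ)
    (hT : 0 < T) (hρ₀ : 0 < ρ₀) (hM : 0 < M) (hδ₀ : 0 < δ₀) (hc : 0 < c)
    (ℓ : Esp d → ℝ) (hℓ : ContDiffOn ℝ 2 ℓ (closedBall 0 ρ₀)) (hℓ0 : ℓ 0 = 0)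
    (Ω : Set (Esp (d+1))) (hΩo : IsOpen Ω) (hΩb : Bornology.IsBounded Ω)
    (hΩsub : ∀ (x' : Esp d) (xn : ℝ), ‖x'‖ < ρ₀ → ℓ x' - c < xn → xn < ℓ x' →
      graphMk d x' xn ∈ Ω)
    (hΩdis : ∀ (x' : Esp d) (xn : ℝ), ‖x'‖ < ρ₀ → ℓ x' ≤ xn → xn < ℓ x' + c →
      graphMk d x' xn ∉ Ω)
    (p : Esp (d+1) → ℝ) (hp : ContinuousOn p (closure Ω))
    (hpb : ∃ Cp : ℝ, ∀ x ∈ closure Ω, |p x| ≤ Cp)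
    (a : Fin (d+1) → Esp (d+1) → ℝ)
    (ha : ∀ k, ContDiffOn ℝ 1 (a k) (closure Ω))
    (hdet : ∀ x ∈ closure Ω,
      (Matrix.of fun (i k : Fin (d+1)) => gradient (a k) x i).det ≠ 0) :
    ∃ ρ₁ ∈ Set.Ioo 0 ρ₀, ∃ ℓt : Esp d → ℝ,
      ContDiffOn ℝ 2 ℓt (closedBall 0 ρ₁) ∧
      (∀ x' : Esp d, ‖x'‖ < ρ₁ → 0 < ℓt x') ∧
      (∀ x' : Esp d, ‖x'‖ = ρ₁ → ℓt x' = 0 ∧ gradient ℓt x' = 0) ∧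
      graphDomain d ρ₁ ℓ ℓt ⊆ Ω ∧
      (0 : Esp (d+1)) ∈ frontier (graphDomain d ρ₁ ℓ ℓt) ∩ frontier Ω ∧
      ∀ H₁ H₂ : Esp (d+1) → Esp (d+1),
        IsAdmissible M δ₀ (closure Ω) H₁ → δ₀ < ⟪H₁ 0, nuUp d ℓ 0⟫ →
        IsAdmissible M δ₀ (closure Ω) H₂ → δ₀ < ⟪H₂ 0, nuUp d ℓ 0⟫ →
        ∀ u₁ u₂ : Fin (d+1) → Esp (d+1) → ℝ → ℝ,
        (∀ k : Fin (d+1),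
          ContDiffOn ℝ 1 (fun q : Esp (d+1) × ℝ => u₁ k q.1 q.2) (closure Ω ×ˢ Icc 0 T) ∧
            ContDiffOn ℝ 1 (fun q : Esp (d+1) × ℝ => deriv (u₁ k q.1) q.2)
              (closure Ω ×ˢ Icc 0 T) ∧
            (∀ x ∈ Ω, ∀ t ∈ Ioo 0 T,
              deriv (u₁ k x) t + ⟪H₁ x, gradient (fun z => u₁ k z t) x⟫
                + p x * u₁ k x t = 0) ∧
            (∀ x ∈ Ω, u₁ k x 0 = a k x)) →
        (∀ k : Fin (d+1),
          ContDiffOn ℝ 1 (fun q : Esp (d+1) × ℝ => u₂ k q.1 q.2) (closure Ω ×ˢ Icc 0 T) ∧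
            ContDiffOn ℝ 1 (fun q : Esp (d+1) × ℝ => deriv (u₂ k q.1) q.2)
              (closure Ω ×ˢ Icc 0 T) ∧
            (∀ x ∈ Ω, ∀ t ∈ Ioo 0 T,
              deriv (u₂ k x) t + ⟪H₂ x, gradient (fun z => u₂ k z t) x⟫
                + p x * u₂ k x t = 0) ∧
            (∀ x ∈ Ω, u₂ k x 0 = a k x)) →
        (∀ k : Fin (d+1), ∀ x' : Esp d, ‖x'‖ < ρ₀ → ∀ t ∈ Ioo (0:ℝ) T,
          u₁ k (graphMk d x' (ℓ x')) t = u₂ k (graphMk d x' (ℓ x')) t) →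
        ∀ x ∈ graphDomain d ρ₁ ℓ ℓt, H₁ x = H₂ x := by
  have hℓat : ∀ x ∈ ball (0 : Esp d) ρ₀, ContDiffAt ℝ 2 ℓ x := fun x hx =>
    hℓ.contDiffAt (mem_of_superset (isOpen_ball.mem_nhds hx) ball_subset_closedBall)
  have hℓdiff : ∀ x ∈ ball (0 : Esp d) ρ₀, DifferentiableAt ℝ ℓ x := fun x hx =>
    (hℓat x hx).differentiableAt two_ne_zero
  have h0mem : (0 : Esp d) ∈ ball (0 : Esp d) ρ₀ := mem_ball_self hρ₀
  have hΦ : ContDiffAt ℝ 1 (graphHeight d ℓ) 0 :=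
    contDiffAt_graphHeight ((hℓat 0 h0mem).of_le one_le_two)
  have hΦ0 : graphHeight d ℓ 0 = 0 := by
    rw [← graphMk_zero d, graphHeight_graphMk, hℓ0, sub_zero]
  have hV : {x | ‖((graphEquiv d).symm x).1‖ < ρ₀ ∧ -c < graphHeight d ℓ x} ∈
      𝓝 (0 : Esp (d + 1)) := by
    have h1 : Continuous fun x : Esp (d + 1) => ‖((graphEquiv d).symm x).1‖ :=
      (continuous_fst.comp (graphEquiv d).symm.continuous).norm
    exact inter_mem (h1.continuousAt.eventually_lt_const (by simpa using hρ₀))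
      (hΦ.continuousAt.eventually_const_lt (by rw [hΦ0]; linarith))
  obtain ⟨r, hr, η, hη, hexit⟩ := exists_exit_curve hΦ hV hT hM hδ₀
    (lipschitzExtensionConstant (Esp (d + 1)) * M.toNNReal)
  obtain ⟨ρ, hρ, hρr⟩ : ∃ ρ > 0, ∀ (x' : Esp d) (y : ℝ), ‖x'‖ < ρ → |y| < ρ →
      ‖graphMk d x' (ℓ x' + y)‖ ≤ r := by
    have h1 : ContinuousAt (fun q : Esp d × ℝ => ‖graphEquiv d (q.1, ℓ q.1 + q.2)‖) 0 := by
      refine ((graphEquiv d).continuous.continuousAt.comp (continuousAt_fst.prodMk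
        (ContinuousAt.add ?_ continuousAt_snd))).norm
      exact ContinuousAt.comp (f := Prod.fst) (hℓdiff 0 h0mem).continuousAt continuousAt_fst
    have h2 := h1.eventually_lt_const (u := r) (by simpa [hℓ0, graphMk_zero] using hr)
    obtain ⟨ρ, hρ, hball⟩ := Metric.eventually_nhds_iff.1 h2
    refine ⟨ρ, hρ, fun x' y hx' hy => (hball (y := (x', y)) ?_).le⟩
    simpa [Prod.norm_def] using ⟨hx', hy⟩
  obtain ⟨ρ₁, hρ₁, hρ₁'⟩ : ∃ ρ₁ > 0, ρ₁ < min ρ ρ₀ := exists_between (lt_min hρ hρ₀)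
  obtain ⟨hρ₁ρ, hρ₁ρ₀⟩ := lt_min_iff.1 hρ₁'
  obtain ⟨ℓt, hℓt, hℓtpos, hℓtbd⟩ := exists_bump (d := d) hρ₁ (lt_min hρ (lt_min hη hc))
  have hDΩ : graphDomain d ρ₁ ℓ ℓt ⊆ Ω := by
    rintro _ ⟨x', xn, hx', h1, h2, rfl⟩
    have h3 := ((hℓtpos x' hx').2.trans (min_le_right _ _)).trans (min_le_right _ _)
    exact hΩsub x' xn (hx'.trans hρ₁ρ₀) (by linarith) h2
  have h0D : (0 : Esp (d + 1)) ∈ closure (graphDomain d ρ₁ ℓ ℓt) := by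
    have hcont : Continuous fun y : ℝ => graphMk d 0 y :=
      (graphEquiv d).continuous.comp (by fun_prop : Continuous fun y : ℝ => ((0 : Esp d), y))
    have hlim := (hcont.tendsto 0).mono_left (nhdsWithin_le_nhds (s := Iio 0))
    rw [graphMk_zero] at hlim
    have hpos := (hℓtpos 0 (by simpa using hρ₁)).1
    refine mem_closure_of_tendsto hlim ?_
    filter_upwards [Ioo_mem_nhdsLT (neg_lt_zero.2 hpos)] with y hy
    exact ⟨0, y, by simpa using hρ₁, by linarith [hy.1], by linarith [hy.2], rfl⟩
  have h0Ω : (0 : Esp (d + 1)) ∉ Ω := by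
    rw [← graphMk_zero d]
    exact hΩdis 0 0 (by simpa using hρ₀) hℓ0.le (by linarith)
  refine ⟨ρ₁, ⟨hρ₁, hρ₁ρ₀⟩, ℓt, hℓt.contDiffOn, fun x' hx' => (hℓtpos x' hx').1, hℓtbd, hDΩ,
    ⟨⟨h0D, fun h => h0Ω (hDΩ (interior_subset h))⟩,
      ⟨closure_mono hDΩ h0D, fun h => h0Ω (interior_subset h)⟩⟩, ?_⟩
  rintro H₁ H₂ hH₁ hH₁0 hH₂ - u₁ u₂ hu₁ hu₂ hagree _ ⟨x', xn, hx', hxn1, hxn2, rfl⟩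
  have hcollar := graphCollar_subset_closure hΩsub
  obtain ⟨G, hG, hHG⟩ := hH₁.exists_lipschitz_extension
  have h0cl : (0 : Esp (d + 1)) ∈ closure Ω := closure_mono hDΩ h0D
  have hbd := (hℓtpos x' hx').2
  rw [le_min_iff, le_min_iff] at hbd
  obtain ⟨τ, hτ, X, hX0, hXV, hXd, hXneg, hXτ⟩ := hexit G hG
    (by rw [← hHG h0cl]; exact hH₁.norm_le h0cl)
    (by rw [← hHG h0cl]; exact inner_nuUp_lt_fderiv_graphHeight (hℓdiff 0 h0mem) hδ₀ hH₁0)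
    (graphMk d x' xn)
    (by
      have := hρr x' (xn - ℓ x') (hx'.trans hρ₁ρ) (by rw [abs_lt]; constructor <;> linarith)
      rwa [add_sub_cancel] at this)
    (by rw [graphHeight_graphMk]; linarith) (by rw [graphHeight_graphMk]; linarith)
  have hXcollar : ∀ s ∈ Icc 0 τ, X s ∈ graphCollar d ρ₀ c ℓ := fun s hs =>
    mem_graphCollar (hXV s).1 (hXV s).2 <| by
      rcases hs.2.eq_or_lt with rfl | h
      · exact hXτ.le
      · exact (hXneg s ⟨hs.1, h⟩).le
  have hXcl : ∀ s ∈ Icc 0 τ, X s ∈ closure Ω := fun s hs => hcollar (hXcollar s hs)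
  have hXΩ : ∀ s ∈ Ico 0 τ, X s ∈ Ω := fun s hs => by
    have h1 := (hXV s).2
    have h2 := hXneg s hs
    rw [graphHeight] at h1 h2
    rw [← graphMk_symm d (X s)]
    exact hΩsub _ _ (hXV s).1 (by linarith) (by linarith)
  have hτcl : τ ∈ Icc 0 τ := right_mem_Icc.2 hτ.1.le
  obtain ⟨κ, hκ, hnd⟩ := exists_norm_le_mul_of_subset_graphCollar hℓdiff
    (fun k => (ha k).mono hcollar) (fun x hx => hdet x (hcollar hx))
    (isCompact_Icc.image_of_continuousOn fun s hs => (hXd s hs).continuousWithinAt)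
    (image_subset_iff.2 hXcollar)
  have hadiff : ∀ k, ∀ x ∈ Ω, DifferentiableAt ℝ (a k) x := fun k x hx =>
    differentiableAt_of_det_gradient_ne_zero (hdet x (subset_closure hx)) k
  choose C₁ hC₁ using fun k => exists_isTransportSolution hΩo hΩb (hadiff k) (hu₁ k).1
    (hu₁ k).2.1 (hu₁ k).2.2.1 (hu₁ k).2.2.2
  choose C₂ hC₂ using fun k => exists_isTransportSolution hΩo hΩb (hadiff k) (hu₂ k).1
    (hu₂ k).2.1 (hu₂ k).2.2.1 (hu₂ k).2.2.2
  obtain ⟨C, hC, hle₁, hle₂⟩ : ∃ C > 0, (∀ k, C₁ k ≤ C) ∧ ∀ k, C₂ k ≤ C := by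
    have hsum : ∀ (f : Fin (d + 1) → ℝ) (k), f k ≤ ∑ k, |f k| := fun f k =>
      (le_abs_self _).trans
        (Finset.single_le_sum (f := fun k => |f k|) (fun _ _ => abs_nonneg _) (Finset.mem_univ k))
    have h1 : 0 ≤ ∑ k, |C₁ k| := by positivity
    have h2 : 0 ≤ ∑ k, |C₂ k| := by positivity
    exact ⟨1 + ∑ k, |C₁ k| + ∑ k, |C₂ k|, by positivity, fun k => by linarith [hsum C₁ k],
      fun k => by linarith [hsum C₂ k]⟩
  obtain ⟨P, hP⟩ := hpb
  have hτgraph : X τ = graphMk d ((graphEquiv d).symm (X τ)).1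
      (ℓ ((graphEquiv d).symm (X τ)).1) := by
    rw [graphHeight, sub_eq_zero] at hXτ
    rw [← hXτ, graphMk_symm]
  have key := drift_eq_of_curve hΩo hC hκ (fun x hx => hP x (subset_closure hx))
    (fun k => (hC₁ k).mono (hle₁ k)) (fun k => (hC₂ k).mono (hle₂ k)) hτ hXΩ (hXcl τ hτcl)
    (fun s hs => by rw [hHG (hXcl s hs)]; exact hXd s hs)
    (fun k t ht => by rw [hτgraph]; exact hagree k _ (hXV τ).1 t ht)
    (fun s hs => hnd (X s) (mem_image_of_mem X (Ico_subset_Icc_self hs)))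
    (m := M + M) (fun s hs => (norm_sub_le _ _).trans
      (add_le_add (hH₁.norm_le (subset_closure (hXΩ s hs)))
        (hH₂.norm_le (subset_closure (hXΩ s hs)))))
    0 ⟨le_rfl, hτ.1⟩
  rwa [hX0] at key
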